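/- For any canonical state w ∈ W and any formula B^T_X φ ∉ F(w), there exists a canonical state u ∈ W such that w ∼_X u, T = 𝒯_u, and φ ∉ F(u). -/

import Mathlib

/- Language: formulas over atomic propositions P, data variables V, actors 𝒜 = A.
   `bel T X φ` is B^T_X φ ; `str C T X φ` is [C]^T_X φ. -/
inductive Formula (P V A : Type) : Type
  | atom : P → Formula P V A
  | neg : Formula P V A → Formula P V A
  | imp : Formula P V A → Formula P V A → Formula P V A
  | bel : Set V → Set V → Formula P V A → Formula P V A
  | str : Set A → Set V → Set V → Formula P V A → Formula P V A

variable {P V A : Type}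

/-- Propositional tautologies: true under every valuation respecting ¬ and →. -/
def Tautology (φ : Formula P V A) : Prop :=
  ∀ v : Formula P V A → Prop,
    (∀ ψ, v (Formula.neg ψ) ↔ ¬ v ψ) →
    (∀ ψ χ, v (Formula.imp ψ χ) ↔ (v ψ → v χ)) →
    v φ

/-- Theorems of the logical system of doxastic strategies. -/
inductive Thm : Formula P V A → Prop
  | taut {φ : Formula P V A} : Tautology φ → Thm φ
  | truth {X : Set V} {φ : Formula P V A} :
      Thm (Formula.imp (Formula.bel ∅ X φ) φ)
  | negIntro {T X : Set V} {φ : Formula P V A} :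
      Thm (Formula.imp (Formula.neg (Formula.bel T X φ))
        (Formula.bel ∅ X (Formula.neg (Formula.bel T X φ))))
  | distrib {T X : Set V} {φ ψ : Formula P V A} :
      Thm (Formula.imp (Formula.bel T X (Formula.imp φ ψ))
        (Formula.imp (Formula.bel T X φ) (Formula.bel T X ψ)))
  | trust {T X Y : Set V} {φ : Formula P V A} :
      Thm (Formula.bel T X (Formula.imp (Formula.bel T Y φ) φ))
  | monoB {T T' X X' : Set V} {φ : Formula P V A} :
      T ⊆ T' → X ⊆ X' →
      Thm (Formula.imp (Formula.bel T X φ) (Formula.bel T' X' φ))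
  | monoS {C C' : Set A} {T T' X X' : Set V} {φ : Formula P V A} :
      T ⊆ T' → X ⊆ X' → C ⊆ C' →
      Thm (Formula.imp (Formula.str C T X φ) (Formula.str C' T' X' φ))
  | coop {C D : Set A} {T X : Set V} {φ ψ : Formula P V A} :
      C ∩ D = ∅ →
      Thm (Formula.imp (Formula.str C T X (Formula.imp φ ψ))
        (Formula.imp (Formula.str D T X φ) (Formula.str (C ∪ D) T X ψ)))
  | strIntro₁ {C : Set A} {T X : Set V} {φ : Formula P V A} :
      Thm (Formula.imp (Formula.str C T X φ) (Formula.bel T X (Formula.str C T X φ)))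
  | strIntro₂ {C : Set A} {T X : Set V} {φ : Formula P V A} :
      Thm (Formula.imp (Formula.bel T X (Formula.str C T X φ)) (Formula.str C T X φ))
  | unavoid {T X Y : Set V} {φ : Formula P V A} :
      Thm (Formula.imp (Formula.bel T X (Formula.str ∅ T Y φ)) (Formula.str ∅ T X φ))
  | pub {T : Set V} {φ : Formula P V A} :
      Thm (Formula.imp (Formula.bel T ∅ φ) (Formula.str ∅ T ∅ φ))
  | mp {φ ψ : Formula P V A} : Thm (Formula.imp φ ψ) → Thm φ → Thm ψ
  | nec {φ : Formula P V A} : Thm φ → Thm (Formula.bel ∅ ∅ φ)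

/-- `Deduces F φ`: φ is derivable from F together with the theorems using only Modus Ponens. -/
inductive Deduces (F : Set (Formula P V A)) : Formula P V A → Prop
  | thm {φ : Formula P V A} : Thm φ → Deduces F φ
  | mem {φ : Formula P V A} : φ ∈ F → Deduces F φ
  | mp {φ ψ : Formula P V A} :
      Deduces F (Formula.imp φ ψ) → Deduces F φ → Deduces F ψ

def Consistent (F : Set (Formula P V A)) : Prop :=
  ¬ ∃ φ : Formula P V A, Deduces F φ ∧ Deduces F (Formula.neg φ)

def MaximalConsistent (F : Set (Formula P V A)) : Prop :=
  Consistent F ∧ ∀ G : Set (Formula P V A), Consistent G → F ⊆ G → F = G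

/-- A game. -/
structure Game (P V A : Type) : Type 1 where
  W : Type
  sim : V → W → W → Prop
  sim_equiv : ∀ x : V, Equivalence (sim x)
  trust : W → Set V
  Δ : Type
  delta_nonempty : Nonempty Δ
  M : W → (A → Δ) → W → Prop
  pi : P → Set W

/-- `w ∼_X u`. -/
def Game.simSet (G : Game P V A) (X : Set V) (w u : G.W) : Prop :=
  ∀ x ∈ X, G.sim x w u

/-- The satisfaction relation `w ⊨ φ` (as `Sat G φ w`). -/
def Sat (G : Game P V A) : Formula P V A → G.W → Prop
  | Formula.atom p, w => w ∈ G.pi p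
  | Formula.neg φ, w => ¬ Sat G φ w
  | Formula.imp φ ψ, w => Sat G φ w → Sat G ψ w
  | Formula.bel T X φ, w =>
      ∀ u : G.W, G.simSet X w u → T ⊆ G.trust u → Sat G φ u
  | Formula.str C T X φ, w =>
      ∃ s : {a : A // a ∈ C} → G.Δ,
        ∀ (u v : G.W) (δ : A → G.Δ),
          G.simSet X w u → T ⊆ G.trust u →
          (∀ (a : A) (h : a ∈ C), s ⟨a, h⟩ = δ a) →
          G.M u δ v → T ⊆ G.trust v → Sat G φ v

/- ===================== Canonical game ===================== -/

/-- One block `X_i, b_i, T_i, F_i` of a canonical state. -/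
structure Block (P V A B : Type) where
  X : Set V
  b : B
  T : Set V
  F : Set (Formula P V A)

variable {B : Type}

/-- `F(w)`: the last set of formulae of the sequence (or `F0` for the root). -/
def cF (F0 : Set (Formula P V A)) (l : List (Block P V A B)) : Set (Formula P V A) :=
  l.getLast?.elim F0 Block.F

/-- `𝒯_w = T(w)`: the last dataset of the sequence (or `T0` for the root). -/
def cTrust (T0 : Set V) (l : List (Block P V A B)) : Set V :=
  l.getLast?.elim T0 Block.T

/-- Membership of a sequence in the set of canonical states `W`. -/
inductive IsState (T0 : Set V) (F0 : Set (Formula P V A)) :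
    List (Block P V A B) → Prop
  | nil :
      (∀ (Y : Set V) (ψ : Formula P V A),
        Formula.imp (Formula.bel T0 Y ψ) ψ ∈ F0) →
      IsState T0 F0 []
  | snoc {l : List (Block P V A B)} {bl : Block P V A B} :
      IsState T0 F0 l →
      MaximalConsistent bl.F →
      (∀ φ : Formula P V A, Formula.bel ∅ bl.X φ ∈ cF F0 l → φ ∈ bl.F) →
      (∀ (Y : Set V) (ψ : Formula P V A),
        Formula.imp (Formula.bel bl.T Y ψ) ψ ∈ bl.F) →
      IsState T0 F0 (l ++ [bl])

/-- The canonical states. -/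
def CState (T0 : Set V) (F0 : Set (Formula P V A)) (B : Type) : Type :=
  {l : List (Block P V A B) // IsState T0 F0 l}

attribute [local instance] Classical.propDecidable

/-- Length of the longest common prefix of two sequences. -/
noncomputable def cpl {α : Type} : List α → List α → Nat
  | a :: as, b :: bs => if a = b then cpl as bs + 1 else 0
  | _, _ => 0

/-- The blocks labelling the edges on the unique simple path between two
nodes of the canonical tree. -/
noncomputable def pathBlocks (w u : List (Block P V A B)) : List (Block P V A B) :=
  w.drop (cpl w u) ++ u.drop (cpl w u)

/-- `w ∼_x u` in the canonical game: every edge along the unique simple path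
between `w` and `u` is labelled with `x`. -/
def csimVar (x : V) (w u : List (Block P V A B)) : Prop :=
  ∀ bl ∈ pathBlocks w u, x ∈ bl.X

/-- `w ∼_X u` in the canonical game. -/
def csim (X : Set V) (w u : List (Block P V A B)) : Prop :=
  ∀ x ∈ X, csimVar x w u

/-- The canonical mechanism `M`. -/
def Mech (T0 : Set V) (F0 : Set (Formula P V A))
    (w : CState T0 F0 B) (δ : A → Formula P V A × CState T0 F0 B)
    (v : CState T0 F0 B) : Prop :=
  ∀ (C : Set A) (T X : Set V) (φ : Formula P V A),
    Formula.str C T X φ ∈ cF F0 w.1 →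
    (∀ a ∈ C, (δ a).1 = φ) →
    (∀ a ∈ C, csim X w.1 (δ a).2.1) →
    T ⊆ cTrust T0 w.1 → T ⊆ cTrust T0 v.1 →
    φ ∈ cF F0 v.1

/-- Satisfaction `w ⊨ φ` on the canonical game (as `CSat T0 F0 φ w`). -/
def CSat (T0 : Set V) (F0 : Set (Formula P V A)) :
    Formula P V A → CState T0 F0 B → Prop
  | Formula.atom p, w => Formula.atom p ∈ cF F0 w.1
  | Formula.neg φ, w => ¬ CSat T0 F0 φ w
  | Formula.imp φ ψ, w => CSat T0 F0 φ w → CSat T0 F0 ψ w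
  | Formula.bel T X φ, w =>
      ∀ u : CState T0 F0 B, csim X w.1 u.1 → T ⊆ cTrust T0 u.1 → CSat T0 F0 φ u
  | Formula.str C T X φ, w =>
      ∃ s : {a : A // a ∈ C} → Formula P V A × CState T0 F0 B,
        ∀ (u v : CState T0 F0 B) (δ : A → Formula P V A × CState T0 F0 B),
          csim X w.1 u.1 → T ⊆ cTrust T0 u.1 →
          (∀ (a : A) (h : a ∈ C), s ⟨a, h⟩ = δ a) →
          Mech T0 F0 u δ v → T ⊆ cTrust T0 v.1 → CSat T0 F0 φ v

/- ===================== Harmony ===================== -/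

/-- Conjunction definable from ¬ and →. -/
def fand (φ ψ : Formula P V A) : Formula P V A :=
  Formula.neg (Formula.imp φ (Formula.neg ψ))

/-- A canonical tautology (verum). -/
noncomputable def verum (P V A : Type) [Nonempty (Formula P V A)] : Formula P V A :=
  Formula.imp (Classical.arbitrary (Formula P V A)) (Classical.arbitrary (Formula P V A))

/-- Conjunction of a finite list of formulae. -/
noncomputable def conjList [Nonempty (Formula P V A)] :
    List (Formula P V A) → Formula P V A
  | [] => verum P V A
  | φ :: l => fand φ (conjList l)

/-- The pair `(F, G)` is in `T`-harmony: `F ⊬ [∅]^T_V ¬⋀G'` for each finite `G' ⊆ G`. -/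
def THarmony [Nonempty (Formula P V A)] (T : Set V)
    (F G : Set (Formula P V A)) : Prop :=
  ∀ l : List (Formula P V A), (∀ ψ ∈ l, ψ ∈ G) →
    ¬ Deduces F (Formula.str ∅ T (Set.univ : Set V) (Formula.neg (conjList l)))

/-!
The formulas believed by `F` under `(T, X)` form a deductively closed set, by Necessitation,
Monotonicity and Distributivity. If `φ` is not among them, Lindenbaum's lemma extends them to a
maximal consistent set omitting `φ`. By Monotonicity this set contains what is known from `X`, and
by Trust it contains every `B^T_Y ψ → ψ`, so it may label a child of the given state along an edge
labelled `X`.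
-/

namespace Deduces

variable {F G : Set (Formula P V A)} {φ ψ χ : Formula P V A}

theorem trans (h : Deduces F χ) (hFG : ∀ ψ ∈ F, Deduces G ψ) : Deduces G χ := by
  induction h with
  | thm h => exact .thm h
  | mem h => exact hFG _ h
  | mp _ _ ih_imp ih => exact .mp ih_imp ih

theorem mono (hFG : F ⊆ G) (h : Deduces F χ) : Deduces G χ :=
  h.trans fun _ hψ => .mem (hFG hψ)

theorem imp_of_right (φ : Formula P V A) (h : Deduces F χ) : Deduces F (.imp φ χ) :=
  .mp (.thm (.taut fun v _ hi => by simp only [hi]; tauto)) h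

theorem imp_self (F : Set (Formula P V A)) (φ : Formula P V A) : Deduces F (.imp φ φ) :=
  .thm (.taut fun v _ hi => by simp only [hi]; tauto)

theorem imp_mp (h : Deduces F (.imp φ (.imp ψ χ))) (h' : Deduces F (.imp φ ψ)) :
    Deduces F (.imp φ χ) := by
  have frege : Thm (.imp (.imp φ (.imp ψ χ)) (.imp (.imp φ ψ) (.imp φ χ))) :=
    .taut fun v _ hi => by simp only [hi]; tauto
  exact .mp (.mp (.thm frege) h) h'

theorem imp_of_insert (h : Deduces (insert φ F) χ) : Deduces F (.imp φ χ) := by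
  induction h with
  | thm h => exact imp_of_right φ (.thm h)
  | mem h =>
    rcases h with rfl | h
    · exact imp_self F _
    · exact imp_of_right φ (.mem h)
  | mp _ _ ih_imp ih => exact ih_imp.imp_mp ih

theorem of_insert_neg (h : Deduces (insert (.neg φ) F) χ)
    (h' : Deduces (insert (.neg φ) F) (.neg χ)) : Deduces F φ := by
  have reductio : Thm (.imp (.imp (.neg φ) χ) (.imp (.imp (.neg φ) (.neg χ)) φ)) :=
    .taut fun v hn hi => by simp only [hi, hn]; tauto
  exact .mp (.mp (.thm reductio) h.imp_of_insert) h'.imp_of_insert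

theorem exists_mem_of_sUnion {c : Set (Set (Formula P V A))} (hne : c.Nonempty)
    (hc : DirectedOn (· ⊆ ·) c) (h : Deduces (⋃₀ c) χ) : ∃ s ∈ c, Deduces s χ := by
  induction h with
  | thm h => exact ⟨hne.some, hne.some_mem, .thm h⟩
  | mem h =>
    obtain ⟨s, hs, h⟩ := h
    exact ⟨s, hs, .mem h⟩
  | mp _ _ ih_imp ih =>
    obtain ⟨s, hs, h_imp⟩ := ih_imp
    obtain ⟨t, ht, h⟩ := ih
    obtain ⟨r, hr, hsr, htr⟩ := hc s hs t ht
    exact ⟨r, hr, .mp (h_imp.mono hsr) (h.mono htr)⟩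

end Deduces

theorem consistent_insert_neg {F : Set (Formula P V A)} {φ : Formula P V A}
    (h : ¬ Deduces F φ) : Consistent (insert (.neg φ) F) := by
  rintro ⟨χ, hχ, hχ_neg⟩
  exact h (hχ.of_insert_neg hχ_neg)

theorem consistent_sUnion {c : Set (Set (Formula P V A))} (hne : c.Nonempty)
    (hc : DirectedOn (· ⊆ ·) c) (hcons : ∀ s ∈ c, Consistent s) : Consistent (⋃₀ c) := by
  rintro ⟨φ, hφ, hφ_neg⟩
  obtain ⟨s, hs, hφ⟩ := hφ.exists_mem_of_sUnion hne hc
  obtain ⟨t, ht, hφ_neg⟩ := hφ_neg.exists_mem_of_sUnion hne hc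
  obtain ⟨r, hr, hsr, htr⟩ := hc s hs t ht
  exact hcons r hr ⟨φ, hφ.mono hsr, hφ_neg.mono htr⟩

theorem Consistent.exists_maximalConsistent_superset {F : Set (Formula P V A)}
    (hF : Consistent F) : ∃ M, F ⊆ M ∧ MaximalConsistent M := by
  obtain ⟨M, hFM, hM⟩ := zorn_subset_nonempty {G : Set (Formula P V A) | Consistent G}
    (fun c hcons hc hne =>
      ⟨⋃₀ c, consistent_sUnion hne hc.directedOn hcons, fun _ => Set.subset_sUnion_of_mem⟩) F hF
  exact ⟨M, hFM, hM.prop, fun _ hG hMG => hM.eq_of_subset hG hMG⟩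

theorem exists_maximalConsistent_notMem {F : Set (Formula P V A)} {φ : Formula P V A}
    (h : ¬ Deduces F φ) : ∃ M, F ⊆ M ∧ MaximalConsistent M ∧ φ ∉ M := by
  obtain ⟨M, hsub, hM⟩ := (consistent_insert_neg h).exists_maximalConsistent_superset
  obtain ⟨hφ_neg, hFM⟩ := Set.insert_subset_iff.mp hsub
  exact ⟨M, hFM, hM, fun hφ => hM.1 ⟨φ, .mem hφ, .mem hφ_neg⟩⟩

/-- A set of formulas is deductively closed if it contains everything derivable from it; the
belief operators are normal modalities over such sets, maximal or not. -/
def DeductivelyClosed (F : Set (Formula P V A)) : Prop :=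
  ∀ ⦃χ : Formula P V A⦄, Deduces F χ → χ ∈ F

theorem MaximalConsistent.deductivelyClosed {F : Set (Formula P V A)}
    (hF : MaximalConsistent F) : DeductivelyClosed F := by
  intro χ hχ
  have insert_trans {ψ} (hψ : Deduces (insert χ F) ψ) : Deduces F ψ :=
    hψ.trans (Set.forall_mem_insert.mpr ⟨hχ, fun _ => .mem⟩)
  have hcons : Consistent (insert χ F) := fun ⟨ψ, hψ, hψ_neg⟩ =>
    hF.1 ⟨ψ, insert_trans hψ, insert_trans hψ_neg⟩
  rw [hF.2 _ hcons (Set.subset_insert _ _)]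
  exact Set.mem_insert _ _

/-- The set `{ψ | B^T_X ψ ∈ F}` of formulas that `F` believes on the dataset `X` when trusting `T`;
for `T = ∅` these are the formulas that `F` knows on `X`. -/
def beliefs (T X : Set V) (F : Set (Formula P V A)) : Set (Formula P V A) :=
  {ψ | .bel T X ψ ∈ F}

namespace DeductivelyClosed

variable {F : Set (Formula P V A)} {T T' X X' : Set V}

theorem beliefs_subset_beliefs (hF : DeductivelyClosed F) (hT : T ⊆ T') (hX : X ⊆ X') :
    beliefs T X F ⊆ beliefs T' X' F :=
  fun _ hψ => hF (.mp (.thm (.monoB hT hX)) (.mem hψ))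

theorem mem_beliefs_of_thm (hF : DeductivelyClosed F) {χ : Formula P V A} (hχ : Thm χ) :
    χ ∈ beliefs T X F :=
  hF.beliefs_subset_beliefs (Set.empty_subset T) (Set.empty_subset X) (hF (.thm (.nec hχ)))

theorem trust_mem_beliefs (hF : DeductivelyClosed F) (Y : Set V) (ψ : Formula P V A) :
    .imp (.bel T Y ψ) ψ ∈ beliefs T X F :=
  hF (.thm .trust)

theorem deductivelyClosed_beliefs (hF : DeductivelyClosed F) :
    DeductivelyClosed (beliefs T X F) := by
  intro χ hχ
  induction hχ with
  | thm h => exact hF.mem_beliefs_of_thm h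
  | mem h => exact h
  | mp _ _ ih_imp ih => exact hF (.mp (.mp (.thm .distrib) (.mem ih_imp)) (.mem ih))

theorem exists_maximalConsistent_beliefs_subset (hF : DeductivelyClosed F) {φ : Formula P V A}
    (h : .bel T X φ ∉ F) : ∃ M, beliefs T X F ⊆ M ∧ MaximalConsistent M ∧ φ ∉ M :=
  exists_maximalConsistent_notMem fun hφ => h (hF.deductivelyClosed_beliefs hφ)

end DeductivelyClosed

theorem cF_append_singleton (F0 : Set (Formula P V A)) (l : List (Block P V A B))
    (bl : Block P V A B) : cF F0 (l ++ [bl]) = bl.F := by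
  simp [cF]

theorem cTrust_append_singleton (T0 : Set V) (l : List (Block P V A B))
    (bl : Block P V A B) : cTrust T0 (l ++ [bl]) = bl.T := by
  simp [cTrust]

theorem cpl_append_right {α : Type} (l m : List α) : cpl l (l ++ m) = l.length := by
  induction l with
  | nil => simp [cpl]
  | cons a l ih => simp [cpl, ih]

theorem pathBlocks_append_right (l m : List (Block P V A B)) : pathBlocks l (l ++ m) = m := by
  simp [pathBlocks, cpl_append_right]

theorem csim_append_right {X : Set V} {l m : List (Block P V A B)} (h : ∀ bl ∈ m, X ⊆ bl.X) :
    csim X l (l ++ m) := by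
  intro x hx bl hbl
  rw [pathBlocks_append_right] at hbl
  exact h bl hbl hx

theorem IsState.deductivelyClosed_cF {T0 : Set V} {F0 : Set (Formula P V A)}
    {l : List (Block P V A B)} (hl : IsState T0 F0 l) (hF0 : DeductivelyClosed F0) :
    DeductivelyClosed (cF F0 l) := by
  cases hl with
  | nil => exact hF0
  | snoc _ hmax =>
    rw [cF_append_singleton]
    exact hmax.deductivelyClosed

theorem belief_child_exists_general [Nonempty B] {T0 : Set V} {F0 : Set (Formula P V A)}
    (hF0 : DeductivelyClosed F0) (w : CState T0 F0 B) {T X : Set V} {φ : Formula P V A}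
    (h : .bel T X φ ∉ cF F0 w.1) :
    ∃ u : CState T0 F0 B, csim X w.1 u.1 ∧ T = cTrust T0 u.1 ∧ φ ∉ cF F0 u.1 := by
  have hF : DeductivelyClosed (cF F0 w.1) := w.2.deductivelyClosed_cF hF0
  obtain ⟨M, hsub, hM, hφ⟩ := hF.exists_maximalConsistent_beliefs_subset h
  let bl : Block P V A B := ⟨X, Classical.arbitrary B, T, M⟩
  have hknown : beliefs ∅ X (cF F0 w.1) ⊆ M :=
    (hF.beliefs_subset_beliefs (Set.empty_subset T) subset_rfl).trans hsub
  have hchild : IsState T0 F0 (w.1 ++ [bl]) :=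
    .snoc w.2 hM hknown fun Y ψ => hsub (hF.trust_mem_beliefs Y ψ)
  refine ⟨⟨w.1 ++ [bl], hchild⟩, csim_append_right ?_, ?_, ?_⟩
  · exact List.forall_mem_singleton.mpr subset_rfl
  · rw [cTrust_append_singleton]
  · rwa [cF_append_singleton]

/-- for any canonical state w and any B^T_X φ ∉ F(w), there is a canonical
state u with w ∼_X u, T = 𝒯_u, and φ ∉ F(u). -/
theorem belief_child_exists {P V A B : Type}
    (T0 : Set V) (F0 : Set (Formula P V A))
    (hF0 : MaximalConsistent F0) (hB : Cardinal.mk A < Cardinal.mk B)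
    (w : CState T0 F0 B) (T X : Set V) (φ : Formula P V A)
    (h : Formula.bel T X φ ∉ cF F0 w.1) :
    ∃ u : CState T0 F0 B,
      csim X w.1 u.1 ∧ T = cTrust T0 u.1 ∧ φ ∉ cF F0 u.1 := by
  have : Nonempty B := Cardinal.mk_ne_zero_iff.mp (ne_zero_of_lt hB)
  exact belief_child_exists_general hF0.deductivelyClosed w h
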